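/- arXiv:1406.0157 — 3 statements merged into one kernel-verified Lean document; each statement's English description precedes it below -/
import Mathlib

section
/- Let k ≥ 1 be an integer and let S ⊆ (ZMod 2)^k be a nonempty set of nonzero vectors. Then at least 2^(k−1) of the vectors R ∈ (ZMod 2)^k (1/8)-elevate S. -/
/-!
The number `c R` of `s ∈ S` with `⟨R, s⟩ = 1` is subadditive in `R`. If fewer than half of all `R`
elevate `S`, the set `B` of non-elevating vectors has density above `1/2`, so every vector is a sum
of two elements of `B`, whence `c R < |S| / 4` for every `R`. But each nonzero `s` satisfies
`⟨R, s⟩ = 1` for half of all `R`, so the average of `c` is `|S| / 2`, a contradiction.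
-/

open Finset

/-- Inner product over GF(2). -/
def ip {k : ℕ} (R s : Fin k → ZMod 2) : ZMod 2 := ∑ i, R i * s i

/-- `R` ε-elevates the finite set `S`. -/
def elevates {k : ℕ} (ε : ℝ) (R : Fin k → ZMod 2) (S : Finset (Fin k → ZMod 2)) : Prop :=
  ε * (S.card : ℝ) ≤ ((S.filter fun s => ip R s = 1).card : ℝ)

lemma ip_add_left {k : ℕ} (R R' s : Fin k → ZMod 2) : ip (R + R') s = ip R s + ip R' s := by
  simp [ip, add_mul, Finset.sum_add_distrib]

/-- At least half of all vectors pair to `1` with a given nonzero vector: adding a basis vector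
`e i` with `s i = 1` maps the vectors pairing to `0` injectively to those pairing to `1`. -/
lemma two_pow_le_two_mul_card_ip_eq_one {k : ℕ} (s : Fin k → ZMod 2) (hs : s ≠ 0) :
    2 ^ k ≤ 2 * (univ.filter fun R : Fin k → ZMod 2 => ip R s = 1).card := by
  have h01 : ∀ x : ZMod 2, x ≠ 1 → x = 0 := by decide
  have h10 : ∀ x : ZMod 2, x ≠ 0 → x = 1 := by decide
  obtain ⟨i, hi⟩ := Function.ne_iff.mp hs
  have he : ip (Pi.single i 1) s = 1 := by
    simp [ip, Pi.single_apply, h10 _ hi]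
  have hle : (univ.filter fun R : Fin k → ZMod 2 => ¬ ip R s = 1).card ≤
      (univ.filter fun R : Fin k → ZMod 2 => ip R s = 1).card := by
    refine Finset.card_le_card_of_injOn (fun R => R + Pi.single i 1) ?_ ?_
    · intro R hR
      have hR : ip R s ≠ 1 := by simpa using hR
      simp [ip_add_left, he, h01 _ hR]
    · intro a _ b _ h
      simpa using h
  have hsum := Finset.card_filter_add_card_filter_not (s := univ)
    (fun R : Fin k → ZMod 2 => ip R s = 1)
  have hc : (univ : Finset (Fin k → ZMod 2)).card = 2 ^ k := by simp [ZMod.card]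
  omega

lemma card_ip_add_le {k : ℕ} (S : Finset (Fin k → ZMod 2)) (R R' : Fin k → ZMod 2) :
    (S.filter fun s => ip (R + R') s = 1).card ≤
      (S.filter fun s => ip R s = 1).card + (S.filter fun s => ip R' s = 1).card := by
  have h : ∀ x y : ZMod 2, x + y = 1 → x = 1 ∨ y = 1 := by decide
  refine le_trans (Finset.card_le_card ?_) (Finset.card_union_le _ _)
  intro s hs
  simp only [mem_filter, mem_union, ip_add_left] at hs ⊢
  rcases h _ _ hs.2 with h | h <;> simp [hs.1, h]

open scoped Classical in
theorem stmt1 (k : ℕ) (hk : 1 ≤ k)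
    (S : Finset (Fin k → ZMod 2)) (hS : S.Nonempty) (hS0 : ∀ s ∈ S, s ≠ 0) :
    2 ^ (k - 1) ≤
      (Finset.univ.filter fun R : Fin k → ZMod 2 =>
        elevates (1 / 8) R S).card := by
  by_contra! hlt
  have hc : (univ : Finset (Fin k → ZMod 2)).card = 2 ^ k := by simp [ZMod.card]
  have hpow : 2 ^ k = 2 * 2 ^ (k - 1) := by
    rw [← pow_succ']; congr 1; omega
  set B := (univ.filter fun R : Fin k → ZMod 2 => elevates (1 / 8) R S)ᶜ with hB
  have hBcard : 2 ^ (k - 1) < B.card := by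
    rw [hB, Finset.card_compl, ← Finset.card_univ, hc]
    omega
  have hsmall : ∀ R ∈ B, 8 * (S.filter fun s => ip R s = 1).card < S.card := by
    intro R hR
    have hR : ¬ elevates (1 / 8) R S := by simpa [hB] using hR
    unfold elevates at hR
    rw [not_le] at hR
    have : (8 : ℝ) * ((S.filter fun s => ip R s = 1).card : ℝ) < S.card := by linarith
    exact_mod_cast this
  have hquarter : ∀ R, 4 * (S.filter fun s => ip R s = 1).card < S.card := by
    intro R
    -- `B` and `R - B` both have density above `1/2`, so they meet.
    have hmeet : ∃ b ∈ B, R - b ∈ B := by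
      by_contra! hno
      have hdisj : Disjoint B (B.image fun b => R - b) := by
        rw [Finset.disjoint_left]
        intro x hx hx'
        obtain ⟨b, hb, rfl⟩ := Finset.mem_image.mp hx'
        exact hno b hb hx
      have himg : (B.image fun b => R - b).card = B.card :=
        Finset.card_image_of_injective _ sub_right_injective
      have hun := Finset.card_le_univ (B ∪ B.image fun b => R - b)
      rw [Finset.card_union_of_disjoint hdisj, ← Finset.card_univ, hc] at hun
      omega
    obtain ⟨b, hb, hb'⟩ := hmeet
    have h := card_ip_add_le S b (R - b)
    rw [add_sub_cancel] at h
    have h1 := hsmall b hb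
    have h2 := hsmall _ hb'
    omega
  have hdouble : ∑ R : Fin k → ZMod 2, (S.filter fun s => ip R s = 1).card =
      ∑ s ∈ S, (univ.filter fun R : Fin k → ZMod 2 => ip R s = 1).card := by
    simp only [Finset.card_filter]
    exact Finset.sum_comm
  have hlow : S.card * 2 ^ k ≤
      2 * ∑ s ∈ S, (univ.filter fun R : Fin k → ZMod 2 => ip R s = 1).card := by
    rw [Finset.mul_sum, ← smul_eq_mul]
    exact Finset.card_nsmul_le_sum _ _ _
      fun s hs => two_pow_le_two_mul_card_ip_eq_one s (hS0 s hs)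
  have hup : 4 * ∑ R : Fin k → ZMod 2, (S.filter fun s => ip R s = 1).card ≤
      2 ^ k * S.card := by
    rw [Finset.mul_sum, ← smul_eq_mul, ← hc]
    exact Finset.sum_le_card_nsmul _ _ _ fun R _ => (hquarter R).le
  have hpos : 0 < S.card * 2 ^ k := Nat.mul_pos hS.card_pos (by positivity)
  rw [hdouble, mul_comm (2 ^ k)] at hup
  omega
end

section
/- Let a, b be real numbers with 0 < a ≤ b and a² ≥ a + b, let f(x) = binom(a,x)·binom(b,x) for x ∈ [0,a], and let t = (ab − 1)/(a + b + 2). Then f attains its maximum on [0, a], and every maximizer x* of f on [0, a] satisfies t ≤ x* ≤ t + 1; in particular |x* − (ab − 1)/(a + b + 2)| ≤ 1. -/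
/-!
The ratio of consecutive values is `f (y + 1) / f y = (a - y) (b - y) / (y + 1) ^ 2`
(`rbinom_step`), and this exceeds `1`, equals `1` or is below `1` according as `y < t`, `y = t` or
`y > t`, because `(a - y) (b - y) - (y + 1) ^ 2 = (a + b + 2) (t - y)`. Hence a maximizer `x < t`
would be beaten by `x + 1`, and a maximizer `x > t + 1` by `x - 1`. The hypothesis
`a + b ≤ a ^ 2` guarantees `0 ≤ t` and `t + 1 ≤ a`, so that these competitors stay in `[0, a]`.
A maximizer exists because `f` is continuous on the compact interval `[0, a]`.
-/

/-- Binomial coefficient extended to real arguments via the Gamma function. -/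
noncomputable def rbinom (a x : ℝ) : ℝ :=
  Real.Gamma (a + 1) / (Real.Gamma (x + 1) * Real.Gamma (a - x + 1))

theorem rbinom_pos {a x : ℝ} (hx : 0 ≤ x) (hxa : x ≤ a) : 0 < rbinom a x := by
  have h1 := Real.Gamma_pos_of_pos (show 0 < a + 1 by linarith)
  have h2 := Real.Gamma_pos_of_pos (show 0 < x + 1 by linarith)
  have h3 := Real.Gamma_pos_of_pos (show 0 < a - x + 1 by linarith)
  unfold rbinom
  positivity

theorem rbinom_step {a y : ℝ} (hy : 0 ≤ y) (hya : y + 1 ≤ a) :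
    rbinom a (y + 1) * (y + 1) = rbinom a y * (a - y) := by
  have h1 := Real.Gamma_pos_of_pos (show 0 < y + 1 by linarith)
  have h2 := Real.Gamma_pos_of_pos (show 0 < a - y by linarith)
  have hy1 : y + 1 ≠ 0 := by positivity
  have hay : a - y ≠ 0 := (show 0 < a - y by linarith).ne'
  unfold rbinom
  rw [show a - (y + 1) + 1 = a - y by ring, Real.Gamma_add_one hy1, Real.Gamma_add_one hay]
  field_simp

theorem rbinom_continuousOn {a c : ℝ} (hc : c ≤ a) :
    ContinuousOn (rbinom a) (Set.Icc 0 c) := by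
  have hG : ∀ s : ℝ, 0 < s → ContinuousAt Real.Gamma s := fun s hs =>
    (Real.differentiableAt_Gamma fun m => by
      have : (0 : ℝ) ≤ m := m.cast_nonneg
      linarith).continuousAt
  intro x hx
  apply ContinuousAt.continuousWithinAt
  have hx1 : 0 < x + 1 := by linarith [hx.1]
  have hx2 : 0 < a - x + 1 := by linarith [hx.2]
  have e1 : ContinuousAt (fun x : ℝ => Real.Gamma (x + 1)) x :=
    ContinuousAt.comp (g := Real.Gamma) (hG _ hx1) (by fun_prop)
  have e2 : ContinuousAt (fun x : ℝ => Real.Gamma (a - x + 1)) x :=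
    ContinuousAt.comp (g := Real.Gamma) (hG _ hx2) (by fun_prop)
  exact continuousAt_const.div (e1.mul e2)
    (mul_pos (Real.Gamma_pos_of_pos hx1) (Real.Gamma_pos_of_pos hx2)).ne'

theorem stmt12 (a b : ℝ) (ha : 0 < a) (hab : a ≤ b) (hsq : a + b ≤ a ^ 2)
    (f : ℝ → ℝ) (hf : ∀ x, f x = rbinom a x * rbinom b x)
    (t : ℝ) (ht : t = (a * b - 1) / (a + b + 2)) :
    (∃ x ∈ Set.Icc (0 : ℝ) a, ∀ y ∈ Set.Icc (0 : ℝ) a, f y ≤ f x) ∧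
    (∀ x ∈ Set.Icc (0 : ℝ) a, (∀ y ∈ Set.Icc (0 : ℝ) a, f y ≤ f x) →
      t ≤ x ∧ x ≤ t + 1 ∧ |x - (a * b - 1) / (a + b + 2)| ≤ 1) := by
  refine ⟨?_, ?_⟩
  · have hc : ContinuousOn f (Set.Icc 0 a) := by
      rw [funext hf]
      exact (rbinom_continuousOn le_rfl).mul (rbinom_continuousOn hab)
    obtain ⟨x, hx, hmax⟩ := isCompact_Icc.exists_isMaxOn (Set.nonempty_Icc.2 ha.le) hc
    exact ⟨x, hx, fun y hy => hmax hy⟩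
  · intro x hx hmax
    obtain ⟨hx0, hxa⟩ := hx
    have hs : 0 < a + b + 2 := by linarith
    have hts : t * (a + b + 2) = a * b - 1 := by
      rw [ht]
      field_simp
    have ha2 : 2 ≤ a := by nlinarith
    have ht0 : 0 ≤ t := by
      rw [ht]
      apply div_nonneg _ hs.le
      nlinarith
    have hta : t + 1 ≤ a := by
      by_contra! h
      nlinarith
    have hpos : ∀ y, 0 ≤ y → y ≤ a → 0 < f y := fun y h0 h1 => by
      rw [hf]
      exact mul_pos (rbinom_pos h0 h1) (rbinom_pos h0 (h1.trans hab))
    have hstep : ∀ y, 0 ≤ y → y + 1 ≤ a →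
        f (y + 1) * (y + 1) ^ 2 = f y * ((y + 1) ^ 2 + (a + b + 2) * (t - y)) := by
      intro y h0 h1
      have e1 := rbinom_step h0 h1
      have e2 := rbinom_step h0 (h1.trans hab)
      have e3 : (y + 1) ^ 2 + (a + b + 2) * (t - y) = (a - y) * (b - y) := by
        linear_combination hts
      rw [e3, hf, hf]
      linear_combination (rbinom b (y + 1) * (y + 1)) * e1 + (rbinom a y * (a - y)) * e2
    have hlow : t ≤ x := by
      by_contra! h
      have e := hstep x hx0 (by linarith)
      have hle := hmax (x + 1) ⟨by linarith, by linarith⟩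
      have hp := mul_pos (hpos x hx0 hxa) (mul_pos hs (sub_pos.2 h))
      have := mul_le_mul_of_nonneg_right hle (sq_nonneg (x + 1))
      linarith
    have hupp : x ≤ t + 1 := by
      by_contra! h
      have e := hstep (x - 1) (by linarith) (by linarith)
      rw [sub_add_cancel] at e
      have hle := hmax (x - 1) ⟨by linarith, by linarith⟩
      have hp := mul_pos (hpos (x - 1) (by linarith) (by linarith))
        (mul_pos hs (show 0 < x - 1 - t by linarith))
      have := mul_le_mul_of_nonneg_right hle (sq_nonneg x)
      linarith
    refine ⟨hlow, hupp, ?_⟩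
    rw [← ht, abs_le]
    constructor <;> linarith
end

section
/- (Error bound of Theorem 2, weakly capacity-achieving rateless codes.) For every real δ > 0 there exist a constant c > 0 and an integer k₀ such that for every k ≥ k₀ there exist an encoding function E : (ZMod 2)^k → (ℕ → ZMod 2) and, for every n ≥ 1, a decoding function D_n : (ZMod 2)^n → (ZMod 2)^k, with the following property: for every p ∈ (0, 1/2) with 1 − H(p) > δ, every integer n ≥ k/(1 − H(p) − δ), and every message m ∈ (ZMod 2)^k, the BSC(p)-probability of the set {η ∈ (ZMod 2)^n : D_n((E m)|_n + η) ≠ m} is at most 2^{−c·k}, where (E m)|_n ∈ (ZMod 2)^n denotes the first n bits of E m. -/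
/-!
The code is a random linear one: message `m` is sent as the sequence `G i ⬝ᵥ m`, where the rows
`G i`, `i : ℕ`, are independent and uniform in `(ZMod 2)^k`; the decoder picks a message whose
codeword is nearest in Hamming distance, and so does not need to know `p`. By linearity, noise `η`
can cause an error only if it is confusable: some nonzero codeword `x` has `wt (x + η) ≤ wt η`.
This condition does not involve the message sent.

For a fixed length `n` and weight `w`, each nonzero codeword prefix is uniform, so the expected
fraction of confusable vectors among those of weight `w` is at most `2^(k - n) V(n, w)`, where
`V(n, w)` is the size of the Hamming ball. The first-moment method, with weights `r ^ n` over all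
pairs `w ≤ n`, yields one matrix obeying these bounds up to a factor `S r ^ (-n)` for every `n` and
`w` simultaneously (`exists_good_matrix`). Working weight by weight makes the choice of the matrix
independent of `p`.

For given `p`, put `L = log ((1 - p) / p)`. The ball bound `V(n, w) ≤ exp (L w) (1 - p)^(-n)`, the
inequality `min 1 (exp x) ≤ exp (s x)` and the binomial theorem bound the error probability by
`exp (s (log S - n log r + log 2 (k - n + n H(p)) + 16 n s))` (`confusable_prob_le`), where the
quadratic term in `s` is uniform in `p` (`chernoff_exponent`). Since
`k - n + n H(p) ≤ - δ n` and `n ≥ k`, choosing `-log r` and `s` to be small multiples of `δ` makes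
this exponentially small in `k`.
-/

open Finset

/-- Hamming weight of a binary vector. -/
def wt {n : ℕ} (x : Fin n → ZMod 2) : ℕ := (Finset.univ.filter fun j => x j = 1).card

/-- Probability, over a vector of n i.i.d. Bernoulli(p) bits, of a set of binary vectors. -/
noncomputable def bscProb {n : ℕ} (p : ℝ) (E : Finset (Fin n → ZMod 2)) : ℝ :=
  ∑ η ∈ E, p ^ wt η * (1 - p) ^ (n - wt η)

/-- Binary entropy function (base-2 logarithms). -/
noncomputable def binH (p : ℝ) : ℝ := -p * Real.logb 2 p - (1 - p) * Real.logb 2 (1 - p)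

/-! ### Weights, balls and exponential moments -/

theorem wt_le {n : ℕ} (x : Fin n → ZMod 2) : wt x ≤ n := by
  simpa [wt] using Finset.card_filter_le (Finset.univ : Finset (Fin n)) (fun j => x j = 1)

/-- The binomial theorem, as a sum over binary vectors graded by weight. -/
theorem sum_wt (n : ℕ) (a b : ℝ) :
    ∑ η : Fin n → ZMod 2, a ^ wt η * b ^ (n - wt η) = (a + b) ^ n := by
  have h (η : Fin n → ZMod 2) :
      a ^ wt η * b ^ (n - wt η) = ∏ j, (if η j = 1 then a else b) := by
    rw [Finset.prod_ite, Finset.prod_const, Finset.prod_const]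
    congr 2
    have := Finset.card_filter_add_card_filter_not (s := (Finset.univ : Finset (Fin n)))
      (fun j => η j = 1)
    simp only [Finset.card_univ, Fintype.card_fin] at this
    unfold wt
    omega
  simp_rw [h]
  rw [← Fintype.piFinset_univ, ← Finset.prod_univ_sum (fun _ => univ)
    (fun _ (x : ZMod 2) => if x = 1 then a else b)]
  rw [Finset.prod_const, Finset.card_univ, Fintype.card_fin]
  congr 1
  have : (univ : Finset (ZMod 2)) = {0, 1} := rfl
  rw [this, Finset.sum_pair (by decide)]
  simp [add_comm]

/-- Second-order expansion in `s`, uniform in `p`, of the exponential moment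
(minus one) of `log ((1 - p) / p)` times a Bernoulli(`p`) variable. -/
theorem chernoff_exponent {p s : ℝ} (hp : 0 < p) (hp2 : p < 1 / 2) (hs : 0 ≤ s) (hs4 : s ≤ 1 / 4) :
    p * (Real.exp (s * Real.log ((1 - p) / p)) - 1) ≤
      p * s * Real.log ((1 - p) / p) + 16 * s ^ 2 := by
  set L := Real.log ((1 - p) / p) with hL
  have hpos : 0 < (1 - p) / p := div_pos (by linarith) hp
  have hL0 : 0 ≤ L := Real.log_nonneg (by rw [le_div_iff₀ hp]; linarith)
  have hexpL : p * Real.exp L = 1 - p := by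
    rw [hL, Real.exp_log hpos]; field_simp
  have hx : 0 ≤ s * L := mul_nonneg hs hL0
  have h1 : Real.exp (s * L) - 1 ≤ s * L * Real.exp (s * L) := by
    have := Real.add_one_le_exp (-(s * L))
    have h2 : Real.exp (-(s * L)) * Real.exp (s * L) = 1 := by rw [← Real.exp_add]; simp
    nlinarith [Real.exp_pos (s * L)]
  have h2 : Real.exp (s * L) - 1 ≤ s * L + (s * L) ^ 2 * Real.exp (s * L) := by
    nlinarith
  -- `L ≤ 4 exp (L / 4)` gives `L² exp (s L) ≤ 16 exp L`, and `p exp L = 1 - p`.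
  have h3 : L ≤ 4 * Real.exp (L / 4) := by
    have := Real.add_one_le_exp (L / 4)
    linarith
  have h4 : L ^ 2 ≤ 16 * Real.exp (L / 2) := by
    have : Real.exp (L / 2) = Real.exp (L / 4) ^ 2 := by
      rw [← Real.exp_nat_mul]; congr 1; push_cast; ring
    rw [this]; nlinarith [Real.exp_pos (L / 4)]
  have h5 : L ^ 2 * Real.exp (s * L) ≤ 16 * Real.exp L := by
    calc L ^ 2 * Real.exp (s * L) ≤ 16 * Real.exp (L / 2) * Real.exp (L / 2) := by
          gcongr; nlinarith
      _ = 16 * Real.exp L := by rw [mul_assoc, ← Real.exp_add]; ring_nf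
  have h6 : p * (L ^ 2 * Real.exp (s * L)) ≤ 16 := by
    calc p * (L ^ 2 * Real.exp (s * L)) ≤ p * (16 * Real.exp L) := by gcongr
      _ ≤ 16 := by linarith
  nlinarith [mul_le_mul_of_nonneg_left h2 hp.le, mul_le_mul_of_nonneg_left h6 (sq_nonneg s)]

/-- Chernoff bound for the size of the Hamming ball of radius `w`. -/
theorem card_ball_le {n : ℕ} (w : ℕ) {L : ℝ} (hL : 0 ≤ L) :
    ((univ.filter fun y : Fin n → ZMod 2 => wt y ≤ w).card : ℝ) ≤
      Real.exp (L * w) * (1 + Real.exp (-L)) ^ n := by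
  have h := sum_wt n (Real.exp (-L)) 1
  simp only [one_pow, mul_one] at h
  rw [add_comm 1, ← h, Finset.card_eq_sum_ones, Nat.cast_sum, Finset.mul_sum]
  refine (Finset.sum_le_sum fun y hy => ?_).trans
    (Finset.sum_le_sum_of_subset_of_nonneg (Finset.filter_subset _ _)
      fun _ _ _ => by positivity)
  rw [← Real.exp_nat_mul, ← Real.exp_add, Nat.cast_one, Real.one_le_exp_iff]
  have : (wt y : ℝ) ≤ w := by exact_mod_cast (Finset.mem_filter.1 hy).2
  nlinarith

/-! ### Random linear codes -/

/-- A nonzero linear form on `(ZMod 2)^k` takes each value on exactly half of the space. -/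
theorem card_dotProduct_eq {k : ℕ} {d : Fin k → ZMod 2} (hd : d ≠ 0) (b : ZMod 2) :
    2 * (univ.filter fun v : Fin k → ZMod 2 => v ⬝ᵥ d = b).card =
      Fintype.card (Fin k → ZMod 2) := by
  obtain ⟨i, hi⟩ := Function.ne_iff.1 hd
  have hi1 : d i = 1 := by
    have : ∀ x : ZMod 2, x ≠ 0 → x = 1 := by decide
    exact this _ hi
  have h1 : (univ.filter fun v : Fin k → ZMod 2 => v ⬝ᵥ d = b).card =
      (univ.filter fun v : Fin k → ZMod 2 => ¬ v ⬝ᵥ d = b).card := by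
    have hb : ∀ x y : ZMod 2, x = y ↔ ¬ (x + 1 = y) := by decide
    refine Finset.card_equiv (Equiv.addRight (Pi.single i 1)) fun v => ?_
    simp only [mem_filter, mem_univ, true_and, Equiv.coe_addRight, add_dotProduct,
      single_dotProduct, one_mul, hi1]
    exact hb _ _
  have h2 := Finset.card_filter_add_card_filter_not (s := (univ : Finset (Fin k → ZMod 2)))
    (fun v => v ⬝ᵥ d = b)
  rw [Finset.card_univ] at h2
  omega

open MeasureTheory in
/-- First-moment method: the expectation of `∑ₙ ∑_{w ≤ n} rⁿ X n w / e n w` is at most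
`∑ₙ (n + 1) rⁿ`, so at some point of the sample space all of its terms obey this bound
simultaneously. -/
theorem exists_all_le_of_lintegral_le {Ω : Type*} [MeasurableSpace Ω] (μ : Measure Ω)
    [IsProbabilityMeasure μ] (X : ℕ → ℕ → Ω → ENNReal) (hX : ∀ n w, Measurable (X n w))
    (e : ℕ → ℕ → ENNReal) (he : ∀ n w, e n w ≠ ⊤) (h : ∀ n w, ∫⁻ ω, X n w ω ∂μ ≤ e n w)
    (r : ENNReal) (hr0 : r ≠ 0) (hr : r ≠ ⊤) :
    ∃ ω, ∀ n w, w ≤ n → e n w ≠ 0 →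
      X n w ω ≤ (∑' n : ℕ, ((n : ENNReal) + 1) * r ^ n) / r ^ n * e n w := by
  set S : ENNReal := ∑' n : ℕ, ((n : ENNReal) + 1) * r ^ n
  let F : Ω → ENNReal := fun ω =>
    ∑' n : ℕ, ∑ w ∈ range (n + 1), r ^ n * (X n w ω / e n w)
  have hm : ∀ n w, Measurable fun ω => r ^ n * (X n w ω / e n w) := fun n w =>
    ((hX n w).div_const _).const_mul _
  have hF : Measurable F := by
    refine Measurable.tsum fun n => ?_
    exact Finset.measurable_fun_sum _ fun w _ => hm n w
  have hint : ∫⁻ ω, F ω ∂μ ≤ S := by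
    rw [lintegral_tsum fun n => (Finset.measurable_fun_sum _ fun w _ => hm n w).aemeasurable]
    refine ENNReal.tsum_le_tsum fun n => ?_
    rw [lintegral_finsetSum _ fun w _ => hm n w]
    calc ∑ w ∈ range (n + 1), ∫⁻ ω, r ^ n * (X n w ω / e n w) ∂μ
        ≤ ∑ w ∈ range (n + 1), r ^ n := by
          refine Finset.sum_le_sum fun w _ => ?_
          rw [lintegral_const_mul _ ((hX n w).div_const _)]
          simp only [div_eq_mul_inv]
          rw [lintegral_mul_const _ (hX n w), ← div_eq_mul_inv]
          calc r ^ n * ((∫⁻ ω, X n w ω ∂μ) / e n w) ≤ r ^ n * (e n w / e n w) := by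
                gcongr; exact h n w
            _ ≤ r ^ n * 1 := by gcongr; exact ENNReal.div_self_le_one
            _ = r ^ n := mul_one _
      _ = ((n : ENNReal) + 1) * r ^ n := by simp
  obtain ⟨ω, hω⟩ := exists_le_lintegral (μ := μ) hF.aemeasurable
  refine ⟨ω, fun n w hw hne => ?_⟩
  have h1 : r ^ n * (X n w ω / e n w) ≤ S := by
    refine le_trans ?_ (hω.trans hint)
    refine le_trans ?_ (ENNReal.le_tsum n)
    exact Finset.single_le_sum (f := fun w => r ^ n * (X n w ω / e n w))
      (fun _ _ => zero_le) (Finset.mem_range.2 (by omega))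
  have h2 : X n w ω / e n w ≤ S / r ^ n := by
    rw [ENNReal.le_div_iff_mul_le (Or.inl (pow_ne_zero _ hr0)) (Or.inl (ENNReal.pow_ne_top hr)),
      mul_comm]
    exact h1
  exact (ENNReal.div_le_iff hne (he n w)).1 h2

open MeasureTheory in
/-- For a matrix with i.i.d. uniform rows, the length-`n` codeword of a fixed nonzero message is
uniform on `(ZMod 2)^n`: each prefix `z` is a measurable event of probability `2⁻ⁿ`. -/
theorem randomMatrix_prob {k : ℕ} (n : ℕ) {d : Fin k → ZMod 2} (hd : d ≠ 0)
    (z : Fin n → ZMod 2) :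
    MeasurableSet {G : ℕ → Fin k → ZMod 2 | (fun j : Fin n => G j ⬝ᵥ d) = z} ∧
    Measure.infinitePi (fun _ : ℕ => (PMF.uniformOfFintype (Fin k → ZMod 2)).toMeasure)
      {G : ℕ → Fin k → ZMod 2 | (fun j : Fin n => G j ⬝ᵥ d) = z} = (2⁻¹ : ENNReal) ^ n := by
  let t : ℕ → Set (Fin k → ZMod 2) := fun i =>
    {v | v ⬝ᵥ d = if h : i < n then z ⟨i, h⟩ else 0}
  have hset : {G : ℕ → Fin k → ZMod 2 | (fun j : Fin n => G j ⬝ᵥ d) = z} =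
      Set.pi (range n : Finset ℕ) t := by
    ext G
    simp only [Set.mem_ofPred_eq, Set.mem_pi, Finset.coe_range, Set.mem_Iio, t, funext_iff]
    constructor
    · intro h i hi
      simpa [hi] using h ⟨i, hi⟩
    · intro h j
      simpa using h j j.2
  have ht : ∀ i, MeasurableSet (t i) := fun i => (Set.toFinite _).measurableSet
  refine ⟨hset ▸ MeasurableSet.pi (Finset.countable_toSet _) fun i _ => ht i, ?_⟩
  rw [hset, Measure.infinitePi_pi _ fun i _ => ht i]
  rw [Finset.prod_congr rfl (g := fun _ => (2⁻¹ : ENNReal)), Finset.prod_const, Finset.card_range]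
  intro i _
  rw [PMF.toMeasure_uniformOfFintype_apply _ (ht i)]
  have hc := card_dotProduct_eq hd (if h : i < n then z ⟨i, h⟩ else 0)
  have hc' : Fintype.card (t i) =
      (univ.filter fun v : Fin k → ZMod 2 =>
        v ⬝ᵥ d = if h : i < n then z ⟨i, h⟩ else 0).card := by
    rw [← Fintype.card_subtype]; rfl
  rw [hc', ← hc]
  have hpos : (univ.filter fun v : Fin k → ZMod 2 =>
        v ⬝ᵥ d = if h : i < n then z ⟨i, h⟩ else 0).card ≠ 0 := by
    have : 0 < Fintype.card (Fin k → ZMod 2) := Fintype.card_pos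
    omega
  generalize (univ.filter fun v : Fin k → ZMod 2 =>
        v ⬝ᵥ d = if h : i < n then z ⟨i, h⟩ else 0).card = N at hpos
  push_cast
  rw [mul_comm, ENNReal.div_eq_inv_mul, ENNReal.mul_inv (by simp) (by simp), mul_comm,
    ← mul_assoc, ENNReal.mul_inv_cancel (by simpa using hpos) (by simp), one_mul]

/-- The noise vectors of weight `w` for which, with the linear code `d ↦ (G j ⬝ᵥ d)_j`, some
nonzero codeword is at least as close to the noise vector as the zero codeword. -/
def confusable {k : ℕ} (G : ℕ → Fin k → ZMod 2) (n w : ℕ) : Finset (Fin n → ZMod 2) :=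
  univ.filter fun η => wt η = w ∧ ∃ d : Fin k → ZMod 2, d ≠ 0 ∧
    wt ((fun j : Fin n => G j ⬝ᵥ d) + η) ≤ w

open MeasureTheory in
/-- A single infinite generator matrix for which, at all lengths `n` and weights `w` at once, the
fraction of confusable noise vectors exceeds the union bound `2^(k - n) |ball of radius w|` by at
most the factor `S / r ^ n`; the constant `S` does not depend on `k`. -/
theorem exists_good_matrix {r : ℝ} (hr0 : 0 < r) (hr1 : r < 1) :
    ∃ S : ℝ, 0 < S ∧ ∀ k : ℕ, ∃ G : ℕ → Fin k → ZMod 2, ∀ n w : ℕ, w ≤ n →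
      ((confusable G n w).card : ℝ) ≤ S / r ^ n *
        ((univ.filter fun y : Fin n → ZMod 2 => wt y = w).card * 2 ^ k *
          (univ.filter fun y : Fin n → ZMod 2 => wt y ≤ w).card * (2⁻¹) ^ n) := by
  have hsum : Summable fun n : ℕ => ((n : ℝ) + 1) * r ^ n := by
    have h1 := summable_pow_mul_geometric_of_norm_lt_one (R := ℝ) 1 (r := r)
      (by rwa [Real.norm_of_nonneg hr0.le])
    have h2 := summable_geometric_of_lt_one hr0.le hr1
    simpa [add_mul] using h1.add h2
  have hS : ∑' n : ℕ, ((n : ENNReal) + 1) * ENNReal.ofReal r ^ n =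
      ENNReal.ofReal (∑' n : ℕ, ((n : ℝ) + 1) * r ^ n) := by
    rw [ENNReal.ofReal_tsum_of_nonneg (fun n => by positivity) hsum]
    refine tsum_congr fun n => ?_
    rw [ENNReal.ofReal_mul (by positivity), ENNReal.ofReal_pow hr0.le,
      ENNReal.ofReal_add (by positivity) zero_le_one]
    simp
  set S : ℝ := ∑' n : ℕ, ((n : ℝ) + 1) * r ^ n
  have hSpos : 0 < S := hsum.tsum_pos (fun n => by positivity) 0 (by simp)
  refine ⟨S, hSpos, fun k => ?_⟩
  let μ : Measure (ℕ → Fin k → ZMod 2) :=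
    Measure.infinitePi (fun _ : ℕ => (PMF.uniformOfFintype (Fin k → ZMod 2)).toMeasure)
  let A : (n : ℕ) → (Fin k → ZMod 2) → (Fin n → ZMod 2) → Set (ℕ → Fin k → ZMod 2) :=
    fun n d z => {G | (fun j : Fin n => G j ⬝ᵥ d) = z}
  -- `X n w G` counts triples: noise of weight `w`, nonzero message `d`, point `y` of the ball of
  -- radius `w` with `G d + η = y`.
  let X : ℕ → ℕ → (ℕ → Fin k → ZMod 2) → ENNReal := fun n w G =>
    ∑ η ∈ univ.filter (fun y : Fin n → ZMod 2 => wt y = w),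
      ∑ d ∈ univ.filter (fun d : Fin k → ZMod 2 => d ≠ 0),
        ∑ y ∈ univ.filter (fun y : Fin n → ZMod 2 => wt y ≤ w),
          (A n d (y - η)).indicator 1 G
  let e : ℕ → ℕ → ENNReal := fun n w =>
    (univ.filter fun y : Fin n → ZMod 2 => wt y = w).card * 2 ^ k *
      (univ.filter fun y : Fin n → ZMod 2 => wt y ≤ w).card * (2⁻¹) ^ n
  have hmeas : ∀ n d z, d ≠ 0 → Measurable ((A n d z).indicator (1 : (ℕ → Fin k → ZMod 2) → ENNReal)) :=
    fun n d z hd => measurable_one.indicator (randomMatrix_prob n hd z).1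
  have hX : ∀ n w, Measurable (X n w) := by
    intro n w
    refine Finset.measurable_fun_sum _ fun η _ => Finset.measurable_fun_sum _ fun d hd =>
      Finset.measurable_fun_sum _ fun y _ => hmeas n d _ (Finset.mem_filter.1 hd).2
  have he : ∀ n w, e n w ≠ ⊤ := by
    intro n w
    simp [e, ENNReal.mul_eq_top, ENNReal.pow_eq_top_iff]
  have hint : ∀ n w, ∫⁻ G, X n w G ∂μ ≤ e n w := by
    intro n w
    have hd0 : ∀ d ∈ univ.filter (fun d : Fin k → ZMod 2 => d ≠ 0), d ≠ 0 := fun d hd =>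
      (Finset.mem_filter.1 hd).2
    have heq : ∫⁻ G, X n w G ∂μ =
        ∑ η ∈ univ.filter (fun y : Fin n → ZMod 2 => wt y = w),
        ∑ d ∈ univ.filter (fun d : Fin k → ZMod 2 => d ≠ 0),
        ∑ y ∈ univ.filter (fun y : Fin n → ZMod 2 => wt y ≤ w), (2⁻¹ : ENNReal) ^ n := by
      rw [lintegral_finsetSum _ fun η _ => Finset.measurable_fun_sum _ fun d hd =>
        Finset.measurable_fun_sum _ fun y _ => hmeas n d _ (hd0 d hd)]
      refine Finset.sum_congr rfl fun η _ => ?_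
      rw [lintegral_finsetSum _ fun d hd =>
        Finset.measurable_fun_sum _ fun y _ => hmeas n d _ (hd0 d hd)]
      refine Finset.sum_congr rfl fun d hd => ?_
      rw [lintegral_finsetSum _ fun y _ => hmeas n d _ (hd0 d hd)]
      refine Finset.sum_congr rfl fun y _ => ?_
      rw [lintegral_indicator_one (randomMatrix_prob n (hd0 d hd) _).1]
      exact (randomMatrix_prob n (hd0 d hd) _).2
    rw [heq]
    simp only [Finset.sum_const, nsmul_eq_mul, e]
    have hcard : ((univ.filter fun d : Fin k → ZMod 2 => d ≠ 0).card : ENNReal) ≤ 2 ^ k := by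
      have := Finset.card_filter_le (univ : Finset (Fin k → ZMod 2)) (fun d => d ≠ 0)
      simp only [Finset.card_univ, Fintype.card_fun, ZMod.card, Fintype.card_fin] at this
      exact_mod_cast this
    calc _ ≤ ((univ.filter fun y : Fin n → ZMod 2 => wt y = w).card : ENNReal) * (2 ^ k *
          ((univ.filter fun y : Fin n → ZMod 2 => wt y ≤ w).card * (2⁻¹) ^ n)) := by gcongr
      _ = _ := by ring
  obtain ⟨G, hG⟩ := exists_all_le_of_lintegral_le μ X hX e he hint (ENNReal.ofReal r)
    (by simpa using hr0) ENNReal.ofReal_ne_top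
  refine ⟨G, fun n w hw => ?_⟩
  by_cases h0 : e n w = 0
  · -- `e n w` vanishes only if no vector has weight `w`.
    have hN : (univ.filter fun y : Fin n → ZMod 2 => wt y = w) = ∅ := by
      by_contra hne
      obtain ⟨y, hy⟩ := Finset.nonempty_iff_ne_empty.2 hne
      have hy' : y ∈ univ.filter fun y : Fin n → ZMod 2 => wt y ≤ w := by
        simp only [mem_filter, mem_univ, true_and] at hy ⊢; omega
      simp only [e, mul_eq_zero, Nat.cast_eq_zero, Finset.card_eq_zero] at h0
      rcases h0 with ((h | h) | h) | h
      · exact hne h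
      · simp at h
      · rw [h] at hy'; simp at hy'
      · simp at h
    have hB : confusable G n w = ∅ := by
      rw [Finset.eq_empty_iff_forall_notMem] at hN ⊢
      intro y hy
      refine hN y ?_
      simp only [confusable, mem_filter, mem_univ, true_and] at hy ⊢
      exact hy.1
    rw [hB, hN]; simp
  · have h1 : ((confusable G n w).card : ENNReal) ≤ X n w G := by
      rw [Finset.card_eq_sum_ones, Nat.cast_sum]
      have hsub : confusable G n w ⊆ univ.filter (fun y : Fin n → ZMod 2 => wt y = w) := by
        intro y hy
        simp only [confusable, mem_filter, mem_univ, true_and] at hy ⊢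
        exact hy.1
      refine le_trans (Finset.sum_le_sum fun η hη => ?_)
        (Finset.sum_le_sum_of_subset hsub)
      simp only [confusable, mem_filter, mem_univ, true_and] at hη
      obtain ⟨-, d, hd, hle⟩ := hη
      refine le_trans ?_ (Finset.single_le_sum (fun _ _ => zero_le)
        (Finset.mem_filter.2 ⟨Finset.mem_univ d, hd⟩))
      refine le_trans ?_ (Finset.single_le_sum (fun _ _ => zero_le)
        (Finset.mem_filter.2 ⟨Finset.mem_univ ((fun j : Fin n => G j ⬝ᵥ d) + η), hle⟩))
      rw [Set.indicator_of_mem]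
      · simp
      · simp [A]
    have h2 := h1.trans (hG n w hw h0)
    rw [hS] at h2
    have h3 := ENNReal.toReal_mono
      (ENNReal.mul_ne_top (ENNReal.div_ne_top ENNReal.ofReal_ne_top
        (pow_ne_zero _ (by simpa using hr0))) (he n w)) h2
    simpa [e, ENNReal.toReal_mul, ENNReal.toReal_div, ENNReal.toReal_ofReal hr0.le,
      ENNReal.toReal_ofReal hSpos.le] using h3

/-! ### Error probability for a given channel -/

theorem sum_comp_wt {n : ℕ} (s : Finset (Fin n → ZMod 2)) (f : ℕ → ℝ) :
    ∑ η ∈ s, f (wt η) = ∑ w ∈ range (n + 1), (s.filter fun η => wt η = w).card * f w := by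
  rw [← Finset.sum_fiberwise_of_maps_to (t := range (n + 1)) (g := wt)
    fun η _ => Finset.mem_range.2 (Nat.lt_succ_of_le (wt_le η))]
  refine Finset.sum_congr rfl fun w _ => ?_
  rw [Finset.sum_congr rfl (g := fun _ => f w), Finset.sum_const, nsmul_eq_mul]
  intro η hη
  rw [(Finset.mem_filter.1 hη).2]

/-- Gallager-type error bound with tilting parameter `s`: the conditional error probability given
weight `w` is at most `min 1 (exp (a + L w)) ≤ exp (s (a + L w))` with `L = log ((1 - p) / p)`, and
averaging this over the binomial law of `w` gives an `n`-th power. -/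
theorem confusable_prob_le {k : ℕ} {G : ℕ → Fin k → ZMod 2} {S ρ : ℝ} (hS : 0 < S) (n : ℕ)
    (hG : ∀ w : ℕ, w ≤ n → ((confusable G n w).card : ℝ) ≤ S / Real.exp (-ρ) ^ n *
        ((univ.filter fun y : Fin n → ZMod 2 => wt y = w).card * 2 ^ k *
          (univ.filter fun y : Fin n → ZMod 2 => wt y ≤ w).card * (2⁻¹) ^ n))
    {p s : ℝ} (hp : 0 < p) (hp2 : p < 1 / 2) (hs : 0 ≤ s) (hs4 : s ≤ 1 / 4) :
    bscProb p (univ.filter fun η : Fin n → ZMod 2 => η ∈ confusable G n (wt η)) ≤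
      Real.exp (s * (Real.log S + n * ρ + Real.log 2 * (k - n + n * binH p) + 16 * n * s)) := by
  have hq : 0 < 1 - p := by linarith
  set L := Real.log ((1 - p) / p) with hLdef
  have hpos : 0 < (1 - p) / p := div_pos hq hp
  have hL0 : 0 ≤ L := Real.log_nonneg (by rw [le_div_iff₀ hp]; linarith)
  have hexpL : 1 + Real.exp (-L) = (1 - p)⁻¹ := by
    rw [Real.exp_neg, hLdef, Real.exp_log hpos]; field_simp; ring
  set a : ℝ := Real.log S + n * ρ + k * Real.log 2 - n * Real.log 2 - n * Real.log (1 - p)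
    with ha
  have hexpa : Real.exp a = S / Real.exp (-ρ) ^ n * 2 ^ k * (2⁻¹) ^ n * ((1 - p)⁻¹) ^ n := by
    rw [ha, Real.exp_sub, Real.exp_sub, Real.exp_add, Real.exp_add, Real.exp_log hS,
      Real.exp_nat_mul, Real.exp_nat_mul, Real.exp_nat_mul, Real.exp_nat_mul,
      Real.exp_log two_pos, Real.exp_log hq, Real.exp_neg, inv_pow, inv_pow, inv_pow]
    field_simp
  have hcard : ∀ w ∈ range (n + 1), ((confusable G n w).card : ℝ) ≤
      (univ.filter fun y : Fin n → ZMod 2 => wt y = w).card * Real.exp (s * (a + L * w)) := by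
    intro w hw
    set N : ℝ := ((univ.filter fun y : Fin n → ZMod 2 => wt y = w).card : ℝ) with hN
    have hN0 : 0 ≤ N := by positivity
    have h1 : ((confusable G n w).card : ℝ) ≤ N := by
      rw [hN]
      refine Nat.cast_le.2 (Finset.card_le_card fun y hy => ?_)
      simp only [confusable, mem_filter, mem_univ, true_and] at hy ⊢
      exact hy.1
    have h2 : ((confusable G n w).card : ℝ) ≤ N * Real.exp (a + L * w) := by
      refine (hG w (Nat.lt_succ_iff.1 (Finset.mem_range.1 hw))).trans ?_
      have hV := card_ball_le (n := n) w hL0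
      rw [hexpL] at hV
      rw [Real.exp_add, hexpa]
      calc _ ≤ S / Real.exp (-ρ) ^ n * (N * 2 ^ k *
            (Real.exp (L * w) * ((1 - p)⁻¹) ^ n) * (2⁻¹) ^ n) := by gcongr
        _ = _ := by ring
    -- `min 1 (exp x) ≤ exp (s x)` for `0 ≤ s ≤ 1`.
    rcases le_total 0 (a + L * w) with hx | hx
    · refine h1.trans (le_mul_of_one_le_right hN0 (Real.one_le_exp (mul_nonneg hs hx)))
    · refine h2.trans (mul_le_mul_of_nonneg_left (Real.exp_le_exp.2 ?_) hN0)
      nlinarith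
  have hfil : ∀ w, ((univ.filter fun η : Fin n → ZMod 2 => η ∈ confusable G n (wt η)).filter
      fun η => wt η = w) = confusable G n w := by
    intro w
    ext η
    simp only [confusable, mem_filter, mem_univ, true_and]
    constructor
    · rintro ⟨h, rfl⟩; exact ⟨rfl, h⟩
    · rintro ⟨rfl, h⟩; exact ⟨h, rfl⟩
  have hH : Real.log 2 * binH p = -Real.log (1 - p) + p * L := by
    have h2 : Real.log 2 ≠ 0 := (Real.log_pos one_lt_two).ne'
    rw [hLdef, Real.log_div hq.ne' hp.ne', binH, Real.logb, Real.logb]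
    field_simp
    ring
  calc bscProb p (univ.filter fun η : Fin n → ZMod 2 => η ∈ confusable G n (wt η))
      = ∑ w ∈ range (n + 1), (confusable G n w).card * (p ^ w * (1 - p) ^ (n - w)) := by
        rw [bscProb, sum_comp_wt _ fun w => p ^ w * (1 - p) ^ (n - w)]
        simp_rw [hfil]
    _ ≤ ∑ w ∈ range (n + 1), ((univ.filter fun y : Fin n → ZMod 2 => wt y = w).card *
          Real.exp (s * (a + L * w))) * (p ^ w * (1 - p) ^ (n - w)) := by
        refine Finset.sum_le_sum fun w hw => ?_
        exact mul_le_mul_of_nonneg_right (hcard w hw) (by positivity)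
    _ = ∑ η : Fin n → ZMod 2,
          Real.exp (s * (a + L * wt η)) * (p ^ wt η * (1 - p) ^ (n - wt η)) := by
        rw [sum_comp_wt univ fun w => Real.exp (s * (a + L * w)) * (p ^ w * (1 - p) ^ (n - w))]
        simp_rw [mul_assoc]
    _ = Real.exp (s * a) * (p * Real.exp (s * L) + (1 - p)) ^ n := by
        rw [← sum_wt, Finset.mul_sum]
        refine Finset.sum_congr rfl fun η _ => ?_
        rw [mul_pow, ← Real.exp_nat_mul, mul_add, Real.exp_add,
          show s * (L * wt η) = wt η * (s * L) by ring]
        ring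
    _ ≤ Real.exp (s * a) * Real.exp (p * s * L + 16 * s ^ 2) ^ n := by
        gcongr
        have h1 := chernoff_exponent hp hp2 hs hs4
        have h2 := Real.add_one_le_exp (p * s * L + 16 * s ^ 2)
        rw [← hLdef] at h1
        linarith
    _ = _ := by
        rw [← Real.exp_nat_mul, ← Real.exp_add]
        congr 1
        rw [ha]
        linear_combination (-(s * n)) * hH

theorem binH_nonneg {p : ℝ} (hp : 0 < p) (hp2 : p < 1 / 2) : 0 ≤ binH p := by
  have h1 : Real.logb 2 p ≤ 0 := Real.logb_nonpos one_lt_two hp.le (by linarith)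
  have h2 : Real.logb 2 (1 - p) ≤ 0 :=
    Real.logb_nonpos one_lt_two (by linarith) (by linarith)
  unfold binH
  nlinarith

theorem stmt17 (δ : ℝ) (hδ : 0 < δ) :
    ∃ c : ℝ, 0 < c ∧ ∃ k₀ : ℕ, ∀ k : ℕ, k₀ ≤ k →
      ∃ E : (Fin k → ZMod 2) → (ℕ → ZMod 2),
      ∃ D : (n : ℕ) → (Fin n → ZMod 2) → (Fin k → ZMod 2),
        ∀ p : ℝ, 0 < p → p < 1 / 2 → δ < 1 - binH p →
          ∀ n : ℕ, (k : ℝ) / (1 - binH p - δ) ≤ (n : ℝ) →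
            ∀ m : Fin k → ZMod 2,
              bscProb p (Finset.univ.filter fun η : Fin n → ZMod 2 =>
                  D n ((fun j : Fin n => E m (j : ℕ)) + η) ≠ m) ≤
                (2 : ℝ) ^ (-c * (k : ℝ)) := by
  have hlog : 0 < Real.log 2 := Real.log_pos one_lt_two
  set ρ : ℝ := δ * Real.log 2 / 4 with hρ
  have hρ0 : 0 < ρ := by positivity
  obtain ⟨S, hS, hmat⟩ := exists_good_matrix (Real.exp_pos (-ρ))
    (Real.exp_lt_one_iff.2 (by linarith : -ρ < 0))
  set s : ℝ := min (1 / 4) (ρ / 16) with hs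
  have hs0 : 0 < s := by positivity
  have hs4 : s ≤ 1 / 4 := min_le_left _ _
  have hs16 : 16 * s ≤ ρ := by have := min_le_right (1 / 4 : ℝ) (ρ / 16); linarith
  refine ⟨s * δ / 4, by positivity, ⌈Real.log S / ρ⌉₊, fun k hk => ?_⟩
  have hk' : Real.log S ≤ k * ρ := by
    rw [← div_le_iff₀ hρ0]
    exact (Nat.le_ceil _).trans (Nat.cast_le.2 hk)
  obtain ⟨G, hG⟩ := hmat k
  -- Minimum-distance decoding, which does not depend on `p`.
  have hdec : ∀ (n : ℕ) (y : Fin n → ZMod 2), ∃ m : Fin k → ZMod 2, ∀ m' : Fin k → ZMod 2,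
      wt ((fun j : Fin n => G j ⬝ᵥ m) + y) ≤ wt ((fun j : Fin n => G j ⬝ᵥ m') + y) :=
    fun n y => Finite.exists_min fun m => wt ((fun j : Fin n => G j ⬝ᵥ m) + y)
  choose D hD using hdec
  refine ⟨fun m i => G i ⬝ᵥ m, D, fun p hp hp2 hcap n hn m => ?_⟩
  have hx : 0 < 1 - binH p - δ := by linarith
  have hkn : (k : ℝ) ≤ n * (1 - binH p - δ) := (div_le_iff₀ hx).1 hn
  have hkn' : (k : ℝ) ≤ n := by
    have := binH_nonneg hp hp2
    have hn0 : (0 : ℝ) ≤ n := n.cast_nonneg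
    nlinarith
  have hsub : (Finset.univ.filter fun η : Fin n → ZMod 2 =>
      D n ((fun j : Fin n => G j ⬝ᵥ m) + η) ≠ m) ⊆
      univ.filter fun η : Fin n → ZMod 2 => η ∈ confusable G n (wt η) := by
    intro η hη
    simp only [confusable, mem_filter, mem_univ, true_and] at hη ⊢
    refine ⟨D n ((fun j : Fin n => G j ⬝ᵥ m) + η) - m, sub_ne_zero.2 hη, ?_⟩
    have h := hD n ((fun j : Fin n => G j ⬝ᵥ m) + η) m
    generalize D n ((fun j : Fin n => G j ⬝ᵥ m) + η) = m' at h
    have hz : ∀ x y z : ZMod 2, x - y + z = x + (y + z) := by decide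
    have hz' : ∀ x y : ZMod 2, x + (x + y) = y := by decide
    convert h using 2
    · funext j
      simp only [Pi.add_apply, dotProduct_sub]
      exact hz _ _ _
    · funext j
      simp only [Pi.add_apply]
      exact (hz' _ _).symm
  calc _ ≤ bscProb p (univ.filter fun η : Fin n → ZMod 2 => η ∈ confusable G n (wt η)) := by
        refine Finset.sum_le_sum_of_subset_of_nonneg hsub fun η _ _ => ?_
        have : 0 < 1 - p := by linarith
        positivity
    _ ≤ _ := confusable_prob_le hS n (hG n) hp hp2 hs0.le hs4
    _ ≤ Real.exp (s * (-(k * ρ))) := by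
        refine Real.exp_le_exp.2 (mul_le_mul_of_nonneg_left ?_ hs0.le)
        have h1 : Real.log 2 * (k - n + n * binH p) ≤ -(4 * (n * ρ)) := by
          have : Real.log 2 * (k - n + n * binH p) ≤ Real.log 2 * (-(n * δ)) :=
            mul_le_mul_of_nonneg_left (by linarith) hlog.le
          rw [hρ]; linarith
        have h2 : 16 * n * s ≤ n * ρ := by
          have := mul_le_mul_of_nonneg_left hs16 (n.cast_nonneg (α := ℝ))
          linarith
        have h3 : (k : ℝ) * ρ ≤ n * ρ := mul_le_mul_of_nonneg_right hkn' hρ0.le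
        linarith
    _ = (2 : ℝ) ^ (-(s * δ / 4) * (k : ℝ)) := by
        rw [Real.rpow_def_of_pos two_pos, hρ]
        ring_nf
end
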